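/- Let n ≥ 1 and let Z be a nonempty proper subset of ℤⁿ. Let H_Z be a complex Hilbert space with orthonormal basis {e_m : m ∈ Z} and U_Z the unitary representation of 𝕋ⁿ on H_Z given by U_Z(w) e_m = ⟨w, m⟩ e_m. Then no POVM M on (𝕋ⁿ, ℬ(𝕋ⁿ)) acting on H_Z that is U_Z-covariant (U_Z(w) M(B) U_Z(w)* = M(w·B) for all w ∈ 𝕋ⁿ and Borel B) is projection valued. In particular (n = 1, Z = ℕ), a covariant phase observable is never a projection valued measure. -/

import Mathlib

open MeasureTheory Set

local notation "⟪" x ", " y "⟫" => @inner ℂ _ _ x y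

noncomputable instance : MeasurableSpace Circle := borel Circle
instance : BorelSpace Circle := ⟨rfl⟩

/-- A normalized positive operator valued measure (POVM). -/
structure POVM (Ω : Type*) [MeasurableSpace Ω] (H : Type*) [NormedAddCommGroup H]
    [InnerProductSpace ℂ H] [CompleteSpace H] where
  toFun : Set Ω → (H →L[ℂ] H)
  isPositive : ∀ B : Set Ω, MeasurableSet B → (toFun B).IsPositive
  normalized : toFun Set.univ = 1
  m_iUnion : ∀ B : ℕ → Set Ω, (∀ k, MeasurableSet (B k)) →
    Pairwise (Function.onFun Disjoint B) → ∀ φ ψ : H,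
      HasSum (fun k => ⟪φ, toFun (B k) ψ⟫) ⟪φ, toFun (⋃ k, B k) ψ⟫

/-- `ℓ²(ℕ)`. -/
noncomputable abbrev ell2 : Type := lp (fun _ : ℕ => ℂ) 2

/-- The character `⟨w, m⟩ = w₁^{m₁} ⋯ w_n^{m_n}` of the torus `𝕋ⁿ`. -/
noncomputable def torusChar {n : ℕ} (w : Fin n → Circle) (m : Fin n → ℤ) : ℂ :=
  ∏ i, (w i : ℂ) ^ (m i)

/-- Covariance of a POVM `M` on `𝕋ⁿ` acting on `H`:
`U_Z(w) M(B) U_Z(w)* = M(w·B)` for all `w ∈ 𝕋ⁿ`. -/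
def TorusCovariant {n : ℕ} {H : Type*} [NormedAddCommGroup H] [InnerProductSpace ℂ H]
    [CompleteSpace H] (U : (Fin n → Circle) → (H ≃ₗᵢ[ℂ] H))
    (M : POVM (Fin n → Circle) H) : Prop :=
  ∀ w : Fin n → Circle, ∀ B : Set (Fin n → Circle), MeasurableSet B →
    ∀ φ ψ : H,
      ⟪(U w φ : H), M.toFun ((fun z => w * z) '' B) (U w ψ)⟫ = ⟪φ, M.toFun B ψ⟫

open scoped Pointwise

/-!
For a projection valued `M`, the integral `T_g = ∫ g dM` of a bounded measurable function `g`, a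
norm limit of integrals of simple functions, satisfies `‖T_g φ‖² = ∫ |g|² d⟨φ, M φ⟩`, so `T_g` does
not shrink norms when `|g| = 1`. Covariance says that conjugation by `U w` turns `T_g` into the
integral of the translate of `g` by `w`. If `g = χ / ψ` is a quotient of two characters, then `T_g`
therefore maps vectors of weight `χ` to vectors of weight `ψ`. Applied to a basis vector of weight
`χ`, it produces a nonzero vector of weight `ψ`, and such a vector must vanish when `ψ` is not one
of the weights of the basis, since it is orthogonal to every basis vector.
-/

section InnerProductSpace

variable {𝕜 E : Type*} [RCLike 𝕜]

lemma norm_sum_sq_of_pairwise_inner_eq_zero [SeminormedAddCommGroup E] [InnerProductSpace 𝕜 E]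
    {ι : Type*} {v : ι → E} {s : Finset ι}
    (h : (s : Set ι).Pairwise fun i j => inner 𝕜 (v i) (v j) = 0) :
    ‖∑ i ∈ s, v i‖ ^ 2 = ∑ i ∈ s, ‖v i‖ ^ 2 := by
  induction s using Finset.cons_induction with
  | empty => simp
  | cons i s hi ih =>
    rw [Finset.coe_cons, Set.pairwise_insert] at h
    have hinner : inner 𝕜 (v i) (∑ j ∈ s, v j) = 0 := by
      rw [inner_sum]
      exact Finset.sum_eq_zero fun j hj => (h.2 j hj (ne_of_mem_of_not_mem hj hi).symm).1
    rw [Finset.sum_cons, Finset.sum_cons, ← ih h.1]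
    simpa only [sq] using norm_add_sq_eq_norm_sq_add_norm_sq_of_inner_eq_zero _ _ hinner

lemma inner_eq_zero_of_isometry_apply_eq_smul [NormedAddCommGroup E] [InnerProductSpace 𝕜 E]
    (V : E →ₗᵢ[𝕜] E) {x y : E} {a c : 𝕜} (hx : V x = a • x) (hy : V y = c • y) (hac : a ≠ c) :
    inner 𝕜 x y = 0 := by
  by_contra hxy
  have hx0 : ‖x‖ ≠ 0 := fun h => hxy (by simp [norm_eq_zero.mp h])
  have ha : ‖a‖ = 1 := by
    simpa [hx, norm_smul, hx0] using V.norm_map x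
  have hca : starRingEnd 𝕜 a * c = 1 := by
    have hV := V.inner_map_map x y
    rw [hx, hy, inner_smul_left, inner_smul_right, ← mul_assoc] at hV
    exact mul_right_cancel₀ hxy (hV.trans (one_mul _).symm)
  refine hac ?_
  calc a = a * (starRingEnd 𝕜 a * c) := by rw [hca, mul_one]
    _ = c := by rw [← mul_assoc, RCLike.mul_conj, ha]; simp

end InnerProductSpace

lemma exists_simpleFunc_dist_le {Ω E : Type*} [MeasurableSpace Ω] [PseudoMetricSpace E]
    [MeasurableSpace E] [OpensMeasurableSpace E] {g : Ω → E} (hg : Measurable g)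
    (hb : TotallyBounded (range g)) {ε : ℝ} (hε : 0 < ε) :
    ∃ f : SimpleFunc Ω E, ∀ x, dist (f x) (g x) ≤ ε := by
  cases isEmpty_or_nonempty Ω
  · exact ⟨SimpleFunc.ofIsEmpty, isEmptyElim⟩
  obtain ⟨t, -, ht, hcover⟩ := Metric.finite_approx_of_totallyBounded hb ε hε
  have hnear (x : Ω) : ∃ y ∈ t, dist (g x) y < ε := by simpa using hcover (mem_range_self x)
  obtain ⟨y₀, -, -⟩ := hnear (Classical.arbitrary Ω)
  lift t to Finset E using ht
  let e : ℕ → E := fun k => t.toList.getD k y₀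
  refine ⟨(SimpleFunc.nearestPt e t.card).comp g hg, fun x => ?_⟩
  obtain ⟨y, hy, hxy⟩ := hnear x
  obtain ⟨k, hk, hky⟩ := List.getElem_of_mem (Finset.mem_toList.mpr hy)
  have hek : e k = y := (List.getD_eq_getElem _ _ hk).trans hky
  have hle := SimpleFunc.edist_nearestPt_le e (g x) ((t.length_toList ▸ hk).le)
  rw [hek, edist_comm y, edist_dist, edist_dist, ENNReal.ofReal_le_ofReal_iff dist_nonneg] at hle
  exact hle.trans hxy.le

namespace POVM

variable {Ω : Type*} [MeasurableSpace Ω] {H : Type*} [NormedAddCommGroup H]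
  [InnerProductSpace ℂ H] [CompleteSpace H] (M : POVM Ω H)

section Additivity

lemma toFun_empty : M.toFun ∅ = 0 := by
  ext ψ
  refine ext_inner_left ℂ fun φ => ?_
  have h := (M.m_iUnion (fun _ => ∅) (fun _ => MeasurableSet.empty)
    (fun _ _ _ => disjoint_empty _) φ ψ).summable
  rw [summable_const_iff] at h
  simpa using h

open Classical in
/-- The complex measure `B ↦ ⟨φ, M(B)ψ⟩`, set to `0` on non-measurable sets as
`MeasureTheory.VectorMeasure` requires. It transfers the additivity of complex measures to `M`. -/
noncomputable def complexMeasure (φ ψ : H) : ComplexMeasure Ω where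
  measureOf' B := if MeasurableSet B then ⟪φ, M.toFun B ψ⟫ else 0
  empty' := by simp [M.toFun_empty]
  not_measurable' _ hB := if_neg hB
  m_iUnion' B hB hd := by
    simpa only [hB, MeasurableSet.iUnion hB, if_true] using M.m_iUnion B hB hd φ ψ

lemma complexMeasure_apply (φ ψ : H) {B : Set Ω} (hB : MeasurableSet B) :
    M.complexMeasure φ ψ B = ⟪φ, M.toFun B ψ⟫ :=
  if_pos hB

lemma toFun_union {A B : Set Ω} (hA : MeasurableSet A) (hB : MeasurableSet B)
    (hd : Disjoint A B) : M.toFun (A ∪ B) = M.toFun A + M.toFun B := by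
  ext ψ
  refine ext_inner_left ℂ fun φ => ?_
  have h := (M.complexMeasure φ ψ).of_union hd hA hB
  simpa only [complexMeasure_apply, hA, hB, hA.union hB, add_apply,
    inner_add_right] using h

lemma sum_toFun_fiber {β : Type*} (f : SimpleFunc Ω β) :
    ∑ y ∈ f.range, M.toFun (f ⁻¹' {y}) = 1 := by
  ext ψ
  refine ext_inner_left ℂ fun φ => ?_
  have hcover : ⋃ y ∈ f.range, f ⁻¹' {y} = univ := by ext x; simp
  have h := (M.complexMeasure φ ψ).of_biUnion_finset (s := f.range)
    (fun y _ z _ hyz => (disjoint_singleton.mpr hyz).preimage f)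
    (fun y _ => f.measurableSet_fiber y)
  simpa only [hcover, complexMeasure_apply, MeasurableSet.univ, f.measurableSet_fiber,
    M.normalized, sum_apply, inner_sum] using h.symm

end Additivity

section SimpleIntegral

/-- The operators `z • M(B)`, as the real-linear maps in `z` from which
`MeasureTheory.SimpleFunc.setToSimpleFunc` builds the integral of a simple function. -/
noncomputable def smulToFun (B : Set Ω) : ℂ →L[ℝ] H →L[ℂ] H :=
  (ContinuousLinearMap.toSpanSingleton ℂ (M.toFun B)).restrictScalars ℝ

lemma smulToFun_apply (B : Set Ω) (z : ℂ) : M.smulToFun B z = z • M.toFun B := rfl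

-- The zero measure makes every simple function integrable and drops all finiteness conditions.
lemma finMeasAdditive_smulToFun : FinMeasAdditive (0 : Measure Ω) M.smulToFun := by
  intro A B hA hB _ _ hd
  ext1 z
  simp only [add_apply, smulToFun_apply, M.toFun_union hA hB hd, smul_add]

/-- The operator `∫ f dM` for a simple function `f`. -/
noncomputable def simpleIntegral (f : SimpleFunc Ω ℂ) : H →L[ℂ] H :=
  f.setToSimpleFunc M.smulToFun

lemma simpleIntegral_eq_sum (f : SimpleFunc Ω ℂ) :
    M.simpleIntegral f = ∑ y ∈ f.range, y • M.toFun (f ⁻¹' {y}) :=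
  rfl

lemma simpleIntegral_sub (f g : SimpleFunc Ω ℂ) :
    M.simpleIntegral (f - g) = M.simpleIntegral f - M.simpleIntegral g :=
  SimpleFunc.setToSimpleFunc_sub _ M.finMeasAdditive_smulToFun (by simp) (by simp)

lemma simpleIntegral_smul (c : ℂ) (f : SimpleFunc Ω ℂ) :
    M.simpleIntegral (c • f) = c • M.simpleIntegral f :=
  SimpleFunc.setToSimpleFunc_smul _ M.finMeasAdditive_smulToFun
    (fun c B z => mul_smul c z (M.toFun B)) c (by simp)

end SimpleIntegral

section ProjectionValued

/-- A POVM is projection valued if all its values on measurable sets are orthogonal projections. -/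
def IsProjectionValued : Prop :=
  ∀ B : Set Ω, MeasurableSet B → IsStarProjection (M.toFun B)

variable {M}

namespace IsProjectionValued

lemma inner_apply_eq_zero_of_disjoint (hM : M.IsProjectionValued) {A B : Set Ω}
    (hA : MeasurableSet A) (hB : MeasurableSet B) (hd : Disjoint A B) (φ ψ : H) :
    ⟪M.toFun A φ, M.toFun B ψ⟫ = 0 := by
  have : IsAddTorsionFree (H →L[ℂ] H) := .of_isTorsionFree ℂ _
  have hA' := (hM A hA).isIdempotentElem
  have hanti := (hA'.add_iff (hM B hB).isIdempotentElem).mp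
    (M.toFun_union hA hB hd ▸ (hM _ (hA.union hB)).isIdempotentElem)
  have hmul : M.toFun A (M.toFun B ψ) = 0 :=
    DFunLike.congr_fun (hA'.mul_eq_zero_of_anticommute hanti) ψ
  rw [← ContinuousLinearMap.adjoint_inner_right, (hM A hA).isSelfAdjoint.adjoint_eq, hmul,
    inner_zero_right]

lemma norm_sq_sum_smul_fiber (hM : M.IsProjectionValued) {β : Type*} (f : SimpleFunc Ω β)
    (c : β → ℂ) (φ : H) :
    ‖∑ y ∈ f.range, c y • M.toFun (f ⁻¹' {y}) φ‖ ^ 2 =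
      ∑ y ∈ f.range, ‖c y‖ ^ 2 * ‖M.toFun (f ⁻¹' {y}) φ‖ ^ 2 := by
  rw [norm_sum_sq_of_pairwise_inner_eq_zero (𝕜 := ℂ)]
  · simp only [norm_smul, mul_pow]
  · intro y _ z _ hyz
    rw [inner_smul_left, inner_smul_right, hM.inner_apply_eq_zero_of_disjoint
      (f.measurableSet_fiber y) (f.measurableSet_fiber z)
      ((disjoint_singleton.mpr hyz).preimage f), mul_zero, mul_zero]

lemma sum_norm_sq_fiber (hM : M.IsProjectionValued) {β : Type*} (f : SimpleFunc Ω β) (φ : H) :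
    ∑ y ∈ f.range, ‖M.toFun (f ⁻¹' {y}) φ‖ ^ 2 = ‖φ‖ ^ 2 := by
  have h := hM.norm_sq_sum_smul_fiber f 1 φ
  simp only [Pi.one_apply, one_smul, norm_one, one_pow, one_mul] at h
  rw [← h, ← sum_apply, M.sum_toFun_fiber, one_apply_eq_self]

lemma norm_sq_simpleIntegral_apply (hM : M.IsProjectionValued) (f : SimpleFunc Ω ℂ) (φ : H) :
    ‖M.simpleIntegral f φ‖ ^ 2 = ∑ y ∈ f.range, ‖y‖ ^ 2 * ‖M.toFun (f ⁻¹' {y}) φ‖ ^ 2 := by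
  rw [simpleIntegral_eq_sum, sum_apply]
  exact hM.norm_sq_sum_smul_fiber f id φ

lemma norm_simpleIntegral_le (hM : M.IsProjectionValued) {f : SimpleFunc Ω ℂ} {C : ℝ}
    (hC : 0 ≤ C) (hf : ∀ x, ‖f x‖ ≤ C) : ‖M.simpleIntegral f‖ ≤ C := by
  refine ContinuousLinearMap.opNorm_le_bound _ hC fun φ => ?_
  refine le_of_sq_le_sq ?_ (by positivity)
  rw [hM.norm_sq_simpleIntegral_apply, mul_pow, ← hM.sum_norm_sq_fiber f, Finset.mul_sum]
  refine Finset.sum_le_sum fun y hy => ?_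
  obtain ⟨x, rfl⟩ := SimpleFunc.mem_range.mp hy
  gcongr
  exact hf x

lemma le_norm_simpleIntegral_apply (hM : M.IsProjectionValued) {f : SimpleFunc Ω ℂ} {c : ℝ}
    (hf : ∀ x, c ≤ ‖f x‖) (φ : H) : c * ‖φ‖ ≤ ‖M.simpleIntegral f φ‖ := by
  obtain hc | hc := le_total c 0
  · exact (mul_nonpos_of_nonpos_of_nonneg hc (norm_nonneg _)).trans (norm_nonneg _)
  refine le_of_sq_le_sq ?_ (norm_nonneg _)
  rw [hM.norm_sq_simpleIntegral_apply, mul_pow, ← hM.sum_norm_sq_fiber f, Finset.mul_sum]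
  refine Finset.sum_le_sum fun y hy => ?_
  obtain ⟨x, rfl⟩ := SimpleFunc.mem_range.mp hy
  gcongr
  exact hf x

lemma dist_simpleIntegral_le (hM : M.IsProjectionValued) {f f' : SimpleFunc Ω ℂ} {C : ℝ}
    (hC : 0 ≤ C) (h : ∀ x, dist (f x) (f' x) ≤ C) :
    dist (M.simpleIntegral f) (M.simpleIntegral f') ≤ C := by
  rw [dist_eq_norm, ← simpleIntegral_sub]
  exact hM.norm_simpleIntegral_le hC fun x => by simpa [dist_eq_norm] using h x

end IsProjectionValued

end ProjectionValued

section SpectralIntegral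

/-- `T` is the integral `∫ g dM`, in the sense of uniform approximation by simple functions: any
simple function within `ε` of `g` has its integral within `ε` of `T`. The estimate is the one that
holds for projection valued `M`; it determines `T` as soon as `g` is a uniform limit of simple
functions. -/
def IsSpectralIntegral (g : Ω → ℂ) (T : H →L[ℂ] H) : Prop :=
  ∀ ε : ℝ, 0 < ε → ∀ f : SimpleFunc Ω ℂ, (∀ x, dist (f x) (g x) ≤ ε) →
    dist (M.simpleIntegral f) T ≤ ε

variable {M} {g : Ω → ℂ} {T T' : H →L[ℂ] H}

lemma IsProjectionValued.exists_isSpectralIntegral (hM : M.IsProjectionValued)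
    (hg : Measurable g) (hb : TotallyBounded (range g)) : ∃ T, M.IsSpectralIntegral g T := by
  have hpos (n : ℕ) : (0 : ℝ) < 1 / (n + 1) := Nat.one_div_pos_of_nat
  choose f hf using fun n => exists_simpleFunc_dist_le hg hb (hpos n)
  have hdist {a : ℝ} {f₁ f₂ : SimpleFunc Ω ℂ} {c : ℝ} (ha : 0 < a) (hc : 0 < c)
      (h₁ : ∀ x, dist (f₁ x) (g x) ≤ a) (h₂ : ∀ x, dist (f₂ x) (g x) ≤ c) :
      dist (M.simpleIntegral f₁) (M.simpleIntegral f₂) ≤ a + c :=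
    hM.dist_simpleIntegral_le (by positivity) fun x =>
      (dist_triangle_right _ _ (g x)).trans (add_le_add (h₁ x) (h₂ x))
  have hlim : Filter.Tendsto (fun n : ℕ => (1 : ℝ) / (n + 1)) Filter.atTop (nhds 0) :=
    tendsto_one_div_add_atTop_nhds_zero_nat
  have hcauchy : CauchySeq fun n => M.simpleIntegral (f n) := by
    refine cauchySeq_of_le_tendsto_0 (fun N : ℕ => (1 : ℝ) / (N + 1) + 1 / (N + 1))
      (fun n m N hn hm => ?_) (by simpa using hlim.add hlim)
    exact (hdist (hpos n) (hpos m) (hf n) (hf m)).trans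
      (add_le_add (Nat.one_div_le_one_div hn) (Nat.one_div_le_one_div hm))
  obtain ⟨T, hT⟩ := cauchySeq_tendsto_of_complete hcauchy
  refine ⟨T, fun ε hε f₀ hf₀ => ?_⟩
  exact le_of_tendsto_of_tendsto' (tendsto_const_nhds.dist hT) (by simpa using hlim.const_add ε)
    fun n => hdist hε (hpos n) hf₀ (hf n)

namespace IsSpectralIntegral

lemma unique (hT : M.IsSpectralIntegral g T) (hT' : M.IsSpectralIntegral g T')
    (hg : Measurable g) (hb : TotallyBounded (range g)) : T = T' := by
  refine eq_of_forall_dist_le fun ε hε => ?_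
  obtain ⟨f, hf⟩ := exists_simpleFunc_dist_le hg hb (half_pos hε)
  calc dist T T' ≤ dist (M.simpleIntegral f) T + dist (M.simpleIntegral f) T' :=
        dist_triangle_left _ _ _
    _ ≤ ε / 2 + ε / 2 := add_le_add (hT _ (half_pos hε) f hf) (hT' _ (half_pos hε) f hf)
    _ = ε := add_halves ε

lemma const_smul (hT : M.IsSpectralIntegral g T) {c : ℂ} (hc : c ≠ 0) :
    M.IsSpectralIntegral (c • g) (c • T) := by
  intro ε hε f hf
  have hc' : 0 < ‖c‖ := norm_pos_iff.mpr hc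
  have hsub : dist (M.simpleIntegral (c⁻¹ • f)) T ≤ ‖c‖⁻¹ * ε := by
    refine hT _ (by positivity) _ fun x => ?_
    calc dist ((c⁻¹ • f) x) (g x) = dist (c⁻¹ • f x) (c⁻¹ • (c • g) x) := by
          simp [inv_mul_cancel_left₀ hc]
      _ ≤ ‖c‖⁻¹ * ε := by
          rw [dist_smul₀, norm_inv]
          exact mul_le_mul_of_nonneg_left (hf x) (by positivity)
  calc dist (M.simpleIntegral f) (c • T)
      = ‖c‖ * dist (M.simpleIntegral (c⁻¹ • f)) T := by
        rw [← dist_smul₀, simpleIntegral_smul, smul_inv_smul₀ hc]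
    _ ≤ ‖c‖ * (‖c‖⁻¹ * ε) := mul_le_mul_of_nonneg_left hsub hc'.le
    _ = ε := mul_inv_cancel_left₀ hc'.ne' ε

lemma le_norm_apply (hM : M.IsProjectionValued) (hT : M.IsSpectralIntegral g T)
    (hg : Measurable g) (hb : TotallyBounded (range g)) {c : ℝ} (hc : ∀ x, c ≤ ‖g x‖) (φ : H) :
    c * ‖φ‖ ≤ ‖T φ‖ := by
  have happrox (ε : ℝ) (hε : 0 < ε) : c * ‖φ‖ ≤ ‖T φ‖ + ε * (2 * ‖φ‖) := by
    obtain ⟨f, hf⟩ := exists_simpleFunc_dist_le hg hb hε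
    have hfc (x : Ω) : c - ε ≤ ‖f x‖ := by
      have hsub := norm_sub_norm_le (g x) (f x)
      rw [← dist_eq_norm, dist_comm] at hsub
      linarith [hc x, hf x]
    have hfφ : (c - ε) * ‖φ‖ ≤ ‖M.simpleIntegral f φ‖ := hM.le_norm_simpleIntegral_apply hfc φ
    have hfT : ‖M.simpleIntegral f φ‖ - ‖T φ‖ ≤ ε * ‖φ‖ := by
      calc ‖M.simpleIntegral f φ‖ - ‖T φ‖ ≤ ‖(M.simpleIntegral f - T) φ‖ := norm_sub_norm_le _ _
        _ ≤ ‖M.simpleIntegral f - T‖ * ‖φ‖ := ContinuousLinearMap.le_opNorm _ _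
        _ ≤ ε * ‖φ‖ := by gcongr; simpa only [dist_eq_norm] using hT ε hε f hf
    linarith
  have hlim : Filter.Tendsto (fun ε => ‖T φ‖ + ε * (2 * ‖φ‖)) (nhdsWithin 0 (Ioi 0))
      (nhds (‖T φ‖ + 0 * (2 * ‖φ‖))) :=
    (Continuous.tendsto (by fun_prop) 0).mono_left nhdsWithin_le_nhds
  rw [zero_mul, add_zero] at hlim
  exact ge_of_tendsto hlim (eventually_mem_nhdsWithin.mono happrox)

end IsSpectralIntegral

end SpectralIntegral

section Covariance

variable {G : Type*} [Group G] [MulAction G Ω]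

/-- Covariance of `M` under `U`: `U(w) M(B) U(w)* = M(w • B)` for measurable `B`. -/
def IsCovariant (M : POVM Ω H) (U : G → H ≃ₗᵢ[ℂ] H) : Prop :=
  ∀ w : G, ∀ B : Set Ω, MeasurableSet B →
    (U w).conjStarAlgEquiv (M.toFun B) = M.toFun (w • B)

variable [MeasurableConstSMul G Ω] {M} {U : G → H ≃ₗᵢ[ℂ] H}

namespace IsCovariant

lemma conj_simpleIntegral_comp_smul (hcov : M.IsCovariant U) (w : G) (f : SimpleFunc Ω ℂ) :
    (U w).conjStarAlgEquiv (M.simpleIntegral (f.comp (w • ·) (measurable_const_smul w))) =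
      M.simpleIntegral f := by
  have hrange : (f.comp (w • ·) (measurable_const_smul w)).range = f.range := by
    refine Finset.coe_injective ?_
    rw [SimpleFunc.coe_range, SimpleFunc.coe_range, SimpleFunc.coe_comp,
      (MulAction.surjective w).range_comp]
  have hfiber (y : ℂ) : w • (f.comp (w • ·) (measurable_const_smul w)) ⁻¹' {y} = f ⁻¹' {y} := by
    rw [SimpleFunc.coe_comp, preimage_comp, preimage_smul, smul_inv_smul]
  rw [simpleIntegral_eq_sum, simpleIntegral_eq_sum, hrange, map_sum]
  refine Finset.sum_congr rfl fun y _ => ?_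
  rw [map_smul, hcov w _ (SimpleFunc.measurableSet_fiber _ y), hfiber]

lemma isSpectralIntegral_conj (hcov : M.IsCovariant U) (w : G) {g : Ω → ℂ} {T : H →L[ℂ] H}
    (hT : M.IsSpectralIntegral g T) :
    M.IsSpectralIntegral (fun x => g (w⁻¹ • x)) ((U w).conjStarAlgEquiv T) := by
  intro ε hε f hf
  rw [← hcov.conj_simpleIntegral_comp_smul w f, (StarAlgEquiv.isometry _).dist_eq]
  exact hT ε hε _ fun x => by simpa using hf (w • x)

lemma exists_apply_eq_smul (hcov : M.IsCovariant U) (hM : M.IsProjectionValued)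
    {g : Ω → Circle} (hg : Measurable g) {a c : G → Circle}
    (hgc : ∀ w x, g (w⁻¹ • x) = c w * g x) {φ : H} (hφ : ∀ w, U w φ = (a w : ℂ) • φ) :
    ∃ v : H, ‖φ‖ ≤ ‖v‖ ∧ ∀ w, U w v = ((c w * a w : Circle) : ℂ) • v := by
  have hcoe : Continuous fun z : Circle => (z : ℂ) := by fun_prop
  have hmeas {h : Ω → Circle} (hh : Measurable h) : Measurable fun x => (h x : ℂ) :=
    hcoe.measurable.comp hh
  have hb (h : Ω → Circle) : TotallyBounded (range fun x => (h x : ℂ)) :=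
    (isCompact_range hcoe).totallyBounded.subset (range_comp_subset_range h _)
  obtain ⟨T, hT⟩ := hM.exists_isSpectralIntegral (hmeas hg) (hb g)
  have hnorm : ‖φ‖ ≤ ‖T φ‖ := by
    simpa only [one_mul] using
      hT.le_norm_apply hM (hmeas hg) (hb g) (fun x => (Circle.norm_coe (g x)).ge) φ
  refine ⟨T φ, hnorm, fun w => ?_⟩
  have hconj : (U w).conjStarAlgEquiv T = (c w : ℂ) • T := by
    have htrans := hcov.isSpectralIntegral_conj w hT
    have hsmul := hT.const_smul (Circle.coe_ne_zero (c w))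
    simp only [hgc] at htrans
    exact htrans.unique hsmul (hmeas (hg.const_mul (c w))) (hb _)
  calc U w (T φ) = (U w).conjStarAlgEquiv T (U w φ) := by simp
    _ = ((c w * a w : Circle) : ℂ) • T φ := by
      rw [hconj, hφ, map_smul, smul_apply, smul_smul, Circle.coe_mul, mul_comm]

end IsCovariant

end Covariance

end POVM

section Torus

variable {n : ℕ}

/-- The character `w ↦ ⟨w, m⟩` of the torus as a homomorphism into the circle. -/
noncomputable def torusCharHom (m : Fin n → ℤ) : (Fin n → Circle) →* Circle where
  toFun w := ∏ i, w i ^ m i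
  map_one' := by simp
  map_mul' w z := by simp [mul_zpow, Finset.prod_mul_distrib]

lemma coe_torusCharHom (m : Fin n → ℤ) (w : Fin n → Circle) :
    (torusCharHom m w : ℂ) = torusChar w m := by
  calc (torusCharHom m w : ℂ) = ∏ i, ((w i ^ m i : Circle) : ℂ) := map_prod Circle.coeHom _ _
    _ = torusChar w m := by simp only [Circle.coe_zpow, torusChar]

lemma measurable_torusCharHom (m : Fin n → ℤ) : Measurable (torusCharHom m) := by
  have : Continuous fun w : Fin n → Circle => ∏ i, w i ^ m i := by fun_prop
  exact this.measurable

lemma injective_zpow_circle : Function.Injective fun (k : ℤ) (z : Circle) => z ^ k := by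
  intro k l hkl
  by_contra hne
  have hsub : ((k - l : ℤ) : ℝ) ≠ 0 := Int.cast_ne_zero.mpr (sub_ne_zero.mpr hne)
  set z : Circle := Circle.exp (Real.pi / (k - l : ℤ)) with hz
  have hpi : z ^ (k - l) = Circle.exp Real.pi := by
    rw [hz, ← Circle.exp_intCast_mul, mul_div_cancel₀ _ hsub]
  have heq : z ^ k = z ^ l := congrFun hkl z
  have hone : z ^ (k - l) = 1 := by rw [zpow_sub, heq, mul_inv_cancel]
  exact Circle.exp_pi_ne_one (hpi.symm.trans hone)

lemma torusCharHom_mulSingle (m : Fin n → ℤ) (i : Fin n) (z : Circle) :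
    torusCharHom m (Pi.mulSingle i z) = z ^ m i := by
  refine (Fintype.prod_eq_single i fun j hj => ?_).trans ?_
  · rw [Pi.mulSingle_eq_of_ne hj, one_zpow]
  · rw [Pi.mulSingle_eq_same]

lemma torusCharHom_injective :
    Function.Injective (torusCharHom : (Fin n → ℤ) → (Fin n → Circle) →* Circle) := by
  intro m p h
  funext i
  refine injective_zpow_circle (funext fun z => ?_)
  simpa only [torusCharHom_mulSingle] using DFunLike.congr_fun h (Pi.mulSingle i z)

lemma TorusCovariant.isCovariant {H : Type*} [NormedAddCommGroup H] [InnerProductSpace ℂ H]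
    [CompleteSpace H] {U : (Fin n → Circle) → (H ≃ₗᵢ[ℂ] H)} {M : POVM (Fin n → Circle) H}
    (h : TorusCovariant U M) : M.IsCovariant U := by
  intro w B hB
  ext ψ
  refine ext_inner_left ℂ fun φ => ?_
  have hw := h w B hB ((U w).symm φ) ((U w).symm ψ)
  rw [LinearIsometryEquiv.apply_symm_apply, LinearIsometryEquiv.apply_symm_apply] at hw
  rw [LinearIsometryEquiv.conjStarAlgEquiv_apply_apply, ← (U w).symm.inner_map_map,
    LinearIsometryEquiv.symm_apply_apply]
  exact hw.symm

end Torus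

theorem stmt10_general {G : Type*} [Group G] [MeasurableSpace G] [MeasurableConstSMul G G]
    {ι : Type*} [Nonempty ι] (χ : ι → G →* Circle) (hχ : ∀ i, Measurable (χ i))
    (ψ : G →* Circle) (hψ : Measurable ψ) (hψχ : ∀ i, χ i ≠ ψ)
    {H : Type*} [NormedAddCommGroup H] [InnerProductSpace ℂ H] [CompleteSpace H]
    (b : HilbertBasis ι ℂ H) (U : G → (H ≃ₗᵢ[ℂ] H))
    (hU : ∀ w i, U w (b i) = (χ i w : ℂ) • b i)
    (M : POVM G H) (hcov : M.IsCovariant U) : ¬ M.IsProjectionValued := by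
  intro hM
  obtain ⟨i⟩ := ‹Nonempty ι›
  have htranslate (w x : G) :
      χ i (w⁻¹ • x) / ψ (w⁻¹ • x) = ψ w / χ i w * (χ i x / ψ x) := by
    simp only [smul_eq_mul, map_mul, map_inv]
    rw [mul_div_mul_comm, inv_div_inv]
  obtain ⟨v, hnorm, hv⟩ := hcov.exists_apply_eq_smul hM ((hχ i).div hψ) htranslate (hU · i)
  have horth (j : ι) : ⟪b j, v⟫ = 0 := by
    obtain ⟨w, hw⟩ := DFunLike.ne_iff.mp (hψχ j)
    refine inner_eq_zero_of_isometry_apply_eq_smul (U w).toLinearIsometry (hU w j) (hv w) ?_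
    simpa [Circle.ext_iff] using hw
  have hv0 : v = 0 := by
    apply b.repr.injective
    ext j
    simpa [b.repr_apply_apply] using horth j
  rw [hv0, norm_zero, b.orthonormal.1 i] at hnorm
  exact absurd hnorm (by norm_num)

theorem stmt10 (n : ℕ) (hn : 1 ≤ n) (Z : Set (Fin n → ℤ)) (hZne : Z.Nonempty)
    (hZproper : Z ≠ Set.univ)
    (H : Type*) [NormedAddCommGroup H] [InnerProductSpace ℂ H] [CompleteSpace H]
    (b : HilbertBasis Z ℂ H)
    (U : (Fin n → Circle) → (H ≃ₗᵢ[ℂ] H))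
    (hU : ∀ w : Fin n → Circle, ∀ m : Z, U w (b m) = torusChar w (m : Fin n → ℤ) • b m)
    (M : POVM (Fin n → Circle) H)
    (hMcov : TorusCovariant U M) :
    -- `M` is not projection valued
    ¬ (∀ B : Set (Fin n → Circle), MeasurableSet B →
        M.toFun B ∘L M.toFun B = M.toFun B ∧ IsSelfAdjoint (M.toFun B)) := by
  intro hM
  obtain ⟨p, hp⟩ := (Set.ne_univ_iff_exists_notMem Z).mp hZproper
  have : Nonempty Z := hZne.to_subtype
  exact stmt10_general (fun m : Z => torusCharHom (m : Fin n → ℤ))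
    (fun m => measurable_torusCharHom _) (torusCharHom p) (measurable_torusCharHom p)
    (fun m h => hp (torusCharHom_injective h ▸ m.2)) b U
    (fun w m => by rw [hU, coe_torusCharHom]) M hMcov.isCovariant
    fun B hB => ⟨(hM B hB).1, (hM B hB).2⟩
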